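/- L∞ error bound: let n ≥ 2, let 0 < r₁ < … < r_n, set h := max_{1≤j≤n−1}(r_{j+1} − r_j), let f ∈ Λ₀, set α := f(0) and ν_j := f(r_j) for 1 ≤ j ≤ n, and let σ be either the interpolant σ^A (with σ(r_j) = ν_j for all j and σ(0) = α) or σ^B (non-singular, with σ(r_j) = ν_j for all j). Then for l ∈ {0,1}: sup_{r ∈ [r₁,r_n]} |f^{(l)}(r) − σ^{(l)}(r)| ≤ (1/(2^{1−l}·√r₁))·h^{3/2−l}·‖f‖₀. -/

import Mathlib

open MeasureTheory Set Filter

noncomputable section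

/-- The radial Beppo Levi energy space `Λ₀`: functions `f : (0,∞) → ℂ` of class `C¹`
whose derivative `f′` is locally absolutely continuous on compact subintervals of `(0,∞)`
(encoded by the fundamental theorem of calculus with an integrable density `f″`),
and whose radial Beppo Levi energy `∫₀^∞ ( r·|f″(r)|² + (1/r)·|f′(r)|² ) dr` is finite. -/
structure Lambda0 where
  f : ℝ → ℂ
  f' : ℝ → ℂ
  f'' : ℝ → ℂ
  hasDeriv : ∀ r ∈ Set.Ioi (0:ℝ), HasDerivAt f (f' r) r
  contDeriv : ContinuousOn f' (Set.Ioi 0)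
  locAC : ∀ a b : ℝ, 0 < a → a ≤ b →
    MeasureTheory.IntegrableOn f'' (Set.Icc a b) ∧
      ∀ x ∈ Set.Icc a b, f' x = f' a + ∫ t in a..x, f'' t
  energyFin : MeasureTheory.IntegrableOn
    (fun r : ℝ => r * ‖f'' r‖ ^ 2 + (1 / r) * ‖f' r‖ ^ 2) (Set.Ioi 0)

/-- The squared radial Beppo Levi energy `‖·‖₀²` of a function with first derivative `g'`
and second derivative `g''`. -/
def energySq (g' g'' : ℝ → ℂ) : ℝ :=
  ∫ r in Set.Ioi (0:ℝ), (r * ‖g'' r‖ ^ 2 + (1 / r) * ‖g' r‖ ^ 2)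

/-- The seminorm `‖f‖₀`. -/
def Lambda0.seminorm0 (F : Lambda0) : ℝ :=
  Real.sqrt (energySq F.f' F.f'')

/-- The semi-inner product `⟨f,g⟩₀`. -/
def innerBL (F G : Lambda0) : ℂ :=
  ∫ r in Set.Ioi (0:ℝ),
    ((r : ℂ) * F.f'' r * (starRingEnd ℂ) (G.f'' r) +
      (1 / (r : ℂ)) * F.f' r * (starRingEnd ℂ) (G.f' r))

/-- A Beppo Levi `L₀`-spline on the positive knots `r 1 < r 2 < … < r n`:
piecewise of the form `a·x² + b·x²·ln x + c + d·ln x` between consecutive knots,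
of the form `a·x² + b·x²·ln x + c` on `(0, r 1)`, of the form `c + d·ln x` on `(r n, ∞)`,
`C²` throughout `(0,∞)`, and continuously extended at `0`. -/
structure IsBLSpline (n : ℕ) (r : ℕ → ℝ) (η : ℝ → ℂ) : Prop where
  pieces : ∀ j : ℕ, 1 ≤ j → j + 1 ≤ n → ∃ a b c d : ℂ,
    ∀ x ∈ Set.Ioo (r j) (r (j + 1)),
      η x = a * (x : ℂ) ^ 2 + b * (x : ℂ) ^ 2 * (Real.log x : ℂ) + c + d * (Real.log x : ℂ)
  left : ∃ a b c : ℂ, ∀ x ∈ Set.Ioo (0 : ℝ) (r 1),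
      η x = a * (x : ℂ) ^ 2 + b * (x : ℂ) ^ 2 * (Real.log x : ℂ) + c
  right : ∃ c d : ℂ, ∀ x ∈ Set.Ioi (r n), η x = c + d * (Real.log x : ℂ)
  smooth : ContDiffOn ℝ 2 η (Set.Ioi 0)
  cont0 : ContinuousWithinAt η (Set.Ici 0) 0

/-- A Beppo Levi `L₀`-spline is non-singular if on `(0, r₁)` it has the form `a·x² + c`. -/
def NonSingularBLS (r1 : ℝ) (η : ℝ → ℂ) : Prop :=
  ∃ a c : ℂ, ∀ x ∈ Set.Ioo (0 : ℝ) r1, η x = a * (x : ℂ) ^ 2 + c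

/-- Rabut's kernel `K`. -/
def Kfun (r t : ℝ) : ℝ :=
  if r ≤ t then 0 else (1 / 4) * (t ^ 2 - r ^ 2 + (r ^ 2 + t ^ 2) * Real.log (r / t))

/-- The limiting kernel `H_{0,∞}` (with left endpoint knot `r1`). -/
def Hfun (r1 r t : ℝ) : ℝ :=
  Kfun r t - Kfun r r1 - Kfun r1 t + (1 / 4) * (r ^ 2 - r1 ^ 2) * Real.log (t / r1)

/-- The basis function `φ₀`. -/
def phi0 (r : ℝ) : ℝ :=
  if r ≤ 1 then r ^ 2 - r ^ 2 * Real.log r else 1 + Real.log r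

/-- Johnson's compactly supported profile `η₂`. -/
def eta2 (x : ℝ) : ℂ :=
  (((4 / 3 : ℝ) * (Real.log 2 - phi0 x + phi0 (x / 2)) : ℝ) : ℂ)

/-- The non-singular compactly supported profile `β`. -/
def betaFn (x : ℝ) : ℂ :=
  (((1 / 5 : ℝ) * (27 * Real.log 3 - 32 * Real.log 2 + 5 * phi0 x
      - 32 * phi0 (x / 2) + 27 * phi0 (x / 3)) : ℝ) : ℂ)

/-- `Ker L₀ = span{r², r² ln r, 1, ln r}`, as functions on `(0,∞)`. -/
def KerL0 : Set (ℝ → ℂ) :=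
  {η | ∃ a b c d : ℂ, ∀ x : ℝ, 0 < x →
    η x = a * (x : ℂ) ^ 2 + b * (x : ℂ) ^ 2 * (Real.log x : ℂ) + c + d * (Real.log x : ℂ)}

/-- `α(h) = inf_{η ∈ Ker L₀} sup_{t ∈ [0,1]} |t^μ − η(1+th)|`. -/
def alphaFn (μ h : ℝ) : ℝ :=
  sInf {v : ℝ | ∃ η ∈ KerL0,
    v = sSup ((fun t : ℝ => ‖((t ^ μ : ℝ) : ℂ) - η (1 + t * h)‖) '' Set.Icc (0 : ℝ) 1)}

/-!
The error `E = f - σ` vanishes at every knot. Piecewise, `x σ''` has derivative `σ' / x` up to a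
constant, so `⟨σ, E⟩₀` telescopes to boundary terms at `0` and `∞`; these vanish because `E'` grows
at most logarithmically. Hence `⟨σ, E⟩₀ = 0` and `‖E‖₀ ≤ ‖f‖₀` by Pythagoras.

By Cauchy–Schwarz, `‖E' d - E' c‖ ≤ √|ln (d / c)| * ‖E‖₀`. Between consecutive knots `E'` has mean
zero, so it is bounded by its oscillation, and integrating from the nearer knot bounds `E`.
-/

open Asymptotics
open scoped Topology Interval ComplexConjugate

section MeanValue

variable {E : Type*} [NormedAddCommGroup E] [NormedSpace ℝ E] {f f' : ℝ → E} {c d K : ℝ}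

lemma norm_le_of_forall_norm_deriv_sub_le (hcd : c < d)
    (hf : ∀ t ∈ Icc c d, HasDerivWithinAt f (f' t) (Icc c d) t) (hfcd : f c = f d) {v : E}
    (hv : ∀ t ∈ Icc c d, ‖f' t - v‖ ≤ K) : ‖v‖ ≤ K := by
  have hderiv (t : ℝ) (ht : t ∈ Icc c d) :
      HasDerivWithinAt (fun t ↦ f t - t • v) (f' t - v) (Icc c d) t := by
    simpa using (hf t ht).fun_sub ((hasDerivWithinAt_id t _).smul_const v)
  have hbound := (convex_Icc c d).norm_image_sub_le_of_norm_hasDerivWithin_le hderiv hv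
    (left_mem_Icc.2 hcd.le) (right_mem_Icc.2 hcd.le)
  have hdiff : f d - d • v - (f c - c • v) = -((d - c) • v) := by
    rw [hfcd, sub_smul]
    abel
  have hpos : 0 < d - c := sub_pos.2 hcd
  rw [hdiff, norm_neg, norm_smul, Real.norm_of_nonneg hpos.le, mul_comm K] at hbound
  exact le_of_mul_le_mul_left hbound hpos

lemma norm_le_half_mul_of_norm_deriv_le
    (hf : ∀ t ∈ Icc c d, HasDerivWithinAt f (f' t) (Icc c d) t) (hfc : f c = 0) (hfd : f d = 0)
    (hf' : ∀ t ∈ Icc c d, ‖f' t‖ ≤ K) {x : ℝ} (hx : x ∈ Icc c d) :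
    ‖f x‖ ≤ (d - c) / 2 * K := by
  have hcd : c ≤ d := hx.1.trans hx.2
  have hmvt {y : ℝ} (hy : y ∈ Icc c d) :=
    (convex_Icc c d).norm_image_sub_le_of_norm_hasDerivWithin_le hf hf' hy hx
  have hleft := hmvt (left_mem_Icc.2 hcd)
  have hright := hmvt (right_mem_Icc.2 hcd)
  rw [hfc, sub_zero, Real.norm_of_nonneg (sub_nonneg.2 hx.1)] at hleft
  rw [hfd, sub_zero, Real.norm_of_nonpos (sub_nonpos.2 hx.2)] at hright
  linarith

end MeanValue

lemma exists_mem_Icc_succ {α : Type*} [LinearOrder α] {r : ℕ → α} {m n : ℕ} (hmn : m < n) {x : α}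
    (hx : x ∈ Icc (r m) (r n)) : ∃ j, m ≤ j ∧ j < n ∧ x ∈ Icc (r j) (r (j + 1)) := by
  induction n, hmn using Nat.le_induction with
  | base => exact ⟨m, le_rfl, m.lt_succ_self, hx⟩
  | succ n hmn ih =>
    rcases le_total x (r n) with hxn | hxn
    · obtain ⟨j, hmj, hjn, hxj⟩ := ih ⟨hx.1, hxn⟩
      exact ⟨j, hmj, hjn.trans n.lt_succ_self, hxj⟩
    · exact ⟨n, (Nat.lt_of_succ_le hmn).le, n.lt_succ_self, hxn, hx.2⟩

lemma integral_norm_mul_norm_le_sqrt_mul_sqrt {α E : Type*} [MeasurableSpace α] {μ : Measure α}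
    [NormedAddCommGroup E] {f g : α → E} (hf : MemLp f 2 μ) (hg : MemLp g 2 μ) :
    ∫ x, ‖f x‖ * ‖g x‖ ∂μ ≤ √(∫ x, ‖f x‖ ^ 2 ∂μ) * √(∫ x, ‖g x‖ ^ 2 ∂μ) := by
  simpa [Real.sqrt_eq_rpow] using
    integral_mul_norm_le_Lp_mul_Lq (p := 2) (q := 2) .two_two
      (by simpa using hf) (by simpa using hg)

lemma eqOn_Icc_of_eqOn_Ioo {X : Type*} [TopologicalSpace X] [T2Space X] {f g : ℝ → X}
    {a b : ℝ} (hf : ContinuousOn f (Ioi 0)) (hg : ContinuousOn g (Ioi 0)) (ha : 0 < a) (hab : a < b)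
    (hfg : EqOn f g (Ioo a b)) : EqOn f g (Icc a b) := by
  have hsub : Icc a b ⊆ Ioi 0 := fun x hx ↦ ha.trans_le hx.1
  exact hfg.of_subset_closure (hf.mono hsub) (hg.mono hsub) Ioo_subset_Icc_self
    (closure_Ioo hab.ne).ge

section InvSqrt

variable {a b : ℝ}

lemma inv_eq_norm_inv_sqrt_sq {t : ℝ} (ht : 0 < t) : t⁻¹ = ‖(√t)⁻¹‖ ^ 2 := by
  rw [norm_inv, Real.norm_eq_abs, inv_pow, sq_abs, Real.sq_sqrt ht.le]

lemma memLp_inv_sqrt (ha : 0 < a) (hab : a ≤ b) :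
    MemLp (fun t ↦ (√t)⁻¹) 2 (volume.restrict (Ioc a b)) := by
  have hint : IntegrableOn (fun t : ℝ ↦ t⁻¹) (Ioc a b) := by
    rw [← intervalIntegrable_iff_integrableOn_Ioc_of_le hab]
    refine intervalIntegral.intervalIntegrable_inv (fun t ht ↦ ?_) continuousOn_id
    rw [uIcc_of_le hab] at ht
    exact (ha.trans_le ht.1).ne'
  exact (memLp_two_iff_integrable_sq_norm
    Real.continuous_sqrt.measurable.inv.aestronglyMeasurable).2
    (hint.congr_fun (fun t ht ↦ inv_eq_norm_inv_sqrt_sq (ha.trans ht.1)) measurableSet_Ioc)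

lemma integral_norm_inv_sqrt_sq (ha : 0 < a) (hab : a ≤ b) :
    ∫ t in Ioc a b, ‖(√t)⁻¹‖ ^ 2 = |Real.log (b / a)| := by
  rw [← setIntegral_congr_fun measurableSet_Ioc
      fun t ht ↦ inv_eq_norm_inv_sqrt_sq (ha.trans ht.1),
    ← intervalIntegral.integral_of_le hab, integral_inv_of_pos ha (ha.trans_le hab),
    abs_of_nonneg (Real.log_nonneg ((one_le_div ha).2 hab))]

end InvSqrt

section MeshConstants

variable {h : ℝ}

lemma sqrt_div_eq_mul_rpow (hh : 0 ≤ h) (r : ℝ) : √(h / r) = 1 / √r * h ^ ((1 : ℝ) / 2) := by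
  rw [Real.sqrt_div hh, ← Real.sqrt_eq_rpow]
  ring

lemma half_mul_sqrt_div (hh : 0 ≤ h) (r : ℝ) :
    h / 2 * √(h / r) = 1 / (2 * √r) * h ^ ((3 : ℝ) / 2) := by
  have hpow : h ^ ((3 : ℝ) / 2) = h * h ^ ((1 : ℝ) / 2) := by
    rw [← Real.rpow_one_add' hh] <;> norm_num
  rw [sqrt_div_eq_mul_rpow hh, hpow]
  ring

end MeshConstants

section AbsoluteContinuity

variable {f f' : ℝ → ℂ} {a b : ℝ}

lemma absolutelyContinuousOnInterval_congr {X : Type*} [PseudoMetricSpace X] {f g : ℝ → X}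
    (hf : AbsolutelyContinuousOnInterval f a b) (hfg : EqOn f g [[a, b]]) :
    AbsolutelyContinuousOnInterval g a b := by
  rw [absolutelyContinuousOnInterval_iff] at hf ⊢
  intro ε hε
  obtain ⟨δ, hδ, H⟩ := hf ε hε
  refine ⟨δ, hδ, fun I hI hlen ↦ ?_⟩
  convert H I hI hlen using 3 with i hi
  · exact (hfg (hI.1 i hi).1).symm
  · exact (hfg (hI.1 i hi).2).symm

lemma absolutelyContinuousOnInterval_conj (hf : AbsolutelyContinuousOnInterval f a b) :
    AbsolutelyContinuousOnInterval (fun x ↦ conj (f x)) a b := by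
  simpa only [AbsolutelyContinuousOnInterval, Complex.dist_conj_conj] using hf

lemma absolutelyContinuousOnInterval_integral (hf' : IntervalIntegrable f' volume a b) {c : ℝ}
    (hc : c ∈ [[a, b]]) : AbsolutelyContinuousOnInterval (fun x ↦ ∫ t in c..x, f' t) a b := by
  have hconst (z : ℂ) : AbsolutelyContinuousOnInterval (fun _ ↦ z) a b :=
    (contDiffOn_const (n := 1)).absolutelyContinuousOnInterval
  have hre : IntervalIntegrable (fun t ↦ (f' t).re) volume a b := ⟨hf'.1.re, hf'.2.re⟩
  have him : IntervalIntegrable (fun t ↦ (f' t).im) volume a b := ⟨hf'.1.im, hf'.2.im⟩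
  refine absolutelyContinuousOnInterval_congr
    (((hre.absolutelyContinuousOnInterval_intervalIntegral hc).fun_smul (hconst 1)).add
      ((him.absolutelyContinuousOnInterval_intervalIntegral hc).fun_smul (hconst Complex.I)))
    fun x hx ↦ ?_
  have hint : IntervalIntegrable f' volume c x := hf'.mono_set (uIcc_subset_uIcc hc hx)
  have hre_int := Complex.reCLM.intervalIntegral_comp_comm hint
  have him_int := Complex.imCLM.intervalIntegral_comp_comm hint
  simp only [Complex.reCLM_apply, Complex.imCLM_apply] at hre_int him_int
  simp [hre_int, him_int]

lemma integral_eq_sub_of_absolutelyContinuousOnInterval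
    (hf : AbsolutelyContinuousOnInterval f a b)
    (hderiv : ∀ᵐ x, x ∈ [[a, b]] → HasDerivAt f (f' x) x)
    (hf' : IntervalIntegrable f' volume a b) : ∫ x in a..b, f' x = f b - f a := by
  obtain ⟨C, hC⟩ :=
    (hf.sub (absolutelyContinuousOnInterval_integral hf' left_mem_uIcc)).const_of_ae_hasDerivAt_zero
      (by
        filter_upwards [hderiv, hf'.ae_hasDerivAt_integral] with x hfx hintx hx
        simpa using (hfx hx).sub (hintx hx a left_mem_uIcc))
  have ha : f a = C := by simpa using hC a left_mem_uIcc
  have hb : f b - ∫ x in a..b, f' x = C := by simpa using hC b right_mem_uIcc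
  rw [ha, ← hb, sub_sub_cancel]

lemma absolutelyContinuousOnInterval_of_contDiffOn_Ioi (hf : ContDiffOn ℝ 1 f (Ioi 0))
    (ha : 0 < a) (hab : a ≤ b) : AbsolutelyContinuousOnInterval f a b := by
  refine (hf.mono ?_).absolutelyContinuousOnInterval
  rw [uIcc_of_le hab]
  exact fun x hx ↦ ha.trans_le hx.1

end AbsoluteContinuity

namespace Lambda0

variable (F G : Lambda0) {a b : ℝ}

/-- The integrand of the energy `‖F‖₀²`. -/
def energyDensity (r : ℝ) : ℝ :=
  r * ‖F.f'' r‖ ^ 2 + 1 / r * ‖F.f' r‖ ^ 2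

lemma energyDensity_nonneg {x : ℝ} (hx : 0 < x) : 0 ≤ F.energyDensity x := by
  unfold energyDensity
  positivity

lemma integrableOn_energyDensity : IntegrableOn F.energyDensity (Ioi 0) := F.energyFin

lemma energySq_nonneg : 0 ≤ energySq F.f' F.f'' :=
  setIntegral_nonneg measurableSet_Ioi fun _ hx ↦ F.energyDensity_nonneg hx

/-- The integrand of the semi-inner product `⟨F, G⟩₀`. -/
def innerDensity (r : ℝ) : ℂ :=
  r * F.f'' r * conj (G.f'' r) + 1 / r * F.f' r * conj (G.f' r)

lemma intervalIntegrable_f'' (ha : 0 < a) (hab : a ≤ b) : IntervalIntegrable F.f'' volume a b :=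
  (intervalIntegrable_iff_integrableOn_Icc_of_le hab).2 (F.locAC a b ha hab).1

lemma aestronglyMeasurable_f'' : AEStronglyMeasurable F.f'' (volume.restrict (Ioi 0)) := by
  refine LocallyIntegrableOn.aestronglyMeasurable fun x (hx : 0 < x) ↦
    ⟨Icc (x / 2) (2 * x), mem_nhdsWithin_of_mem_nhds (Icc_mem_nhds ?_ ?_),
      (F.locAC _ _ (half_pos hx) ?_).1⟩ <;> linarith

lemma aestronglyMeasurable_f' : AEStronglyMeasurable F.f' (volume.restrict (Ioi 0)) :=
  F.contDeriv.aestronglyMeasurable measurableSet_Ioi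

lemma ae_hasDerivAt_f' (ha : 0 < a) (hab : a ≤ b) :
    ∀ᵐ x, x ∈ [[a, b]] → HasDerivAt F.f' (F.f'' x) x := by
  have ha' : 0 < a / 2 := half_pos ha
  have hab' : a / 2 ≤ b + 1 := by linarith
  filter_upwards [(F.intervalIntegrable_f'' ha' hab').ae_hasDerivAt_integral] with x hderiv hx
  rw [uIcc_of_le hab] at hx
  rw [uIcc_of_le hab'] at hderiv
  have hx' : x ∈ Ioo (a / 2) (b + 1) := ⟨by linarith [hx.1], by linarith [hx.2]⟩
  refine ((hderiv (Ioo_subset_Icc_self hx') _ (left_mem_Icc.2 hab')).const_add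
    (F.f' (a / 2))).congr_of_eventuallyEq ?_
  filter_upwards [isOpen_Ioo.mem_nhds hx'] with y hy
  exact (F.locAC _ _ ha' hab').2 y (Ioo_subset_Icc_self hy)

lemma absolutelyContinuousOnInterval_f' (ha : 0 < a) (hab : a ≤ b) :
    AbsolutelyContinuousOnInterval F.f' a b := by
  have hconst : AbsolutelyContinuousOnInterval (fun _ ↦ F.f' a) a b :=
    (contDiffOn_const (n := 1)).absolutelyContinuousOnInterval
  refine absolutelyContinuousOnInterval_congr (hconst.fun_add
    (absolutelyContinuousOnInterval_integral (F.intervalIntegrable_f'' ha hab) left_mem_uIcc))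
    fun x hx ↦ ?_
  rw [uIcc_of_le hab] at hx
  exact ((F.locAC a b ha hab).2 x hx).symm

lemma contDiffOn_f : ContDiffOn ℝ 1 F.f (Ioi 0) := by
  have hderiv : ContDiffOn ℝ 0 (deriv F.f) (Ioi 0) :=
    contDiffOn_zero.2 (F.contDeriv.congr fun x hx ↦ (F.hasDeriv x hx).deriv)
  refine (contDiffOn_succ_iff_deriv_of_isOpen (n := 0) isOpen_Ioi).2
    ⟨fun x hx ↦ (F.hasDeriv x hx).differentiableAt.differentiableWithinAt, by simp, hderiv⟩

lemma norm_innerDensity_le {x : ℝ} (hx : 0 < x) :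
    ‖innerDensity F G x‖ ≤ F.energyDensity x + G.energyDensity x := by
  have hprod (u v : ℝ) (hu : 0 ≤ u * v) : u * v ≤ u ^ 2 + v ^ 2 := by
    nlinarith [two_mul_le_add_sq u v, hu]
  have hsecond := mul_le_mul_of_nonneg_left
    (hprod ‖F.f'' x‖ ‖G.f'' x‖ (by positivity)) hx.le
  have hfirst := mul_le_mul_of_nonneg_left
    (hprod ‖F.f' x‖ ‖G.f' x‖ (by positivity)) (one_div_pos.2 hx).le
  calc ‖innerDensity F G x‖
      ≤ x * (‖F.f'' x‖ * ‖G.f'' x‖) + 1 / x * (‖F.f' x‖ * ‖G.f' x‖) := by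
        refine (norm_add_le _ _).trans_eq ?_
        simp [abs_of_pos hx, mul_assoc]
    _ ≤ F.energyDensity x + G.energyDensity x := by
        unfold energyDensity
        linarith

lemma integrableOn_innerDensity : IntegrableOn (innerDensity F G) (Ioi 0) := by
  refine (F.integrableOn_energyDensity.add G.integrableOn_energyDensity).mono' ?_ ?_
  · have hid : AEStronglyMeasurable (fun x : ℝ ↦ (x : ℂ)) (volume.restrict (Ioi 0)) :=
      Complex.continuous_ofReal.aestronglyMeasurable
    have hinv : AEStronglyMeasurable (fun x : ℝ ↦ 1 / (x : ℂ)) (volume.restrict (Ioi 0)) :=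
      (measurable_const.div Complex.measurable_ofReal).aestronglyMeasurable
    exact ((hid.mul F.aestronglyMeasurable_f'').mul
      (Complex.continuous_conj.comp_aestronglyMeasurable G.aestronglyMeasurable_f'')).add
      ((hinv.mul F.aestronglyMeasurable_f').mul
        (Complex.continuous_conj.comp_aestronglyMeasurable G.aestronglyMeasurable_f'))
  · filter_upwards [ae_restrict_mem measurableSet_Ioi] with x hx
    exact norm_innerDensity_le F G hx

lemma integrableOn_energyDensity_sub :
    IntegrableOn (fun x ↦ x * ‖F.f'' x - G.f'' x‖ ^ 2 + 1 / x * ‖F.f' x - G.f' x‖ ^ 2) (Ioi 0) := by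
  have hsq (z w : ℂ) : ‖z - w‖ ^ 2 ≤ 2 * (‖z‖ ^ 2 + ‖w‖ ^ 2) := by
    nlinarith [norm_sub_le z w, norm_nonneg (z - w), sq_nonneg (‖z‖ - ‖w‖)]
  refine ((F.integrableOn_energyDensity.add G.integrableOn_energyDensity).const_mul 2).mono'
    ((aestronglyMeasurable_id.mul
      ((F.aestronglyMeasurable_f''.sub G.aestronglyMeasurable_f'').norm.pow 2)).add
      ((measurable_const.div measurable_id).aestronglyMeasurable.mul
        ((F.aestronglyMeasurable_f'.sub G.aestronglyMeasurable_f').norm.pow 2))) ?_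
  filter_upwards [ae_restrict_mem measurableSet_Ioi] with x (hx : 0 < x)
  rw [Real.norm_of_nonneg (by positivity)]
  have hsecond := mul_le_mul_of_nonneg_left (hsq (F.f'' x) (G.f'' x)) hx.le
  have hfirst := mul_le_mul_of_nonneg_left (hsq (F.f' x) (G.f' x)) (one_div_pos.2 hx).le
  simp only [Pi.add_apply, energyDensity]
  linarith

instance : Sub Lambda0 where
  sub F G :=
    { f := fun x ↦ F.f x - G.f x
      f' := fun x ↦ F.f' x - G.f' x
      f'' := fun x ↦ F.f'' x - G.f'' x
      hasDeriv := fun x hx ↦ (F.hasDeriv x hx).fun_sub (G.hasDeriv x hx)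
      contDeriv := F.contDeriv.sub G.contDeriv
      locAC := fun a b ha hab ↦ by
        refine ⟨(F.locAC a b ha hab).1.sub (G.locAC a b ha hab).1, fun x hx ↦ ?_⟩
        rw [intervalIntegral.integral_sub (F.intervalIntegrable_f'' ha hx.1)
          (G.intervalIntegrable_f'' ha hx.1), (F.locAC a b ha hab).2 x hx,
          (G.locAC a b ha hab).2 x hx]
        ring
      energyFin := integrableOn_energyDensity_sub F G }

@[simp] lemma sub_f (x : ℝ) : (F - G).f x = F.f x - G.f x := rfl

@[simp] lemma sub_f' (x : ℝ) : (F - G).f' x = F.f' x - G.f' x := rfl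

@[simp] lemma sub_f'' (x : ℝ) : (F - G).f'' x = F.f'' x - G.f'' x := rfl

lemma energyDensity_eq_add_add (x : ℝ) :
    F.energyDensity x =
      G.energyDensity x + (F - G).energyDensity x + 2 * (innerDensity G (F - G) x).re := by
  have hsq (z w : ℂ) : ‖z‖ ^ 2 = ‖w‖ ^ 2 + ‖z - w‖ ^ 2 + 2 * (w * conj (z - w)).re := by
    simp [Complex.sq_norm, Complex.normSq_apply]
    ring
  have hre : (innerDensity G (F - G) x).re = x * (G.f'' x * conj ((F - G).f'' x)).re +
      1 / x * (G.f' x * conj ((F - G).f' x)).re := by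
    simp only [innerDensity, mul_assoc, Complex.add_re, Complex.re_ofReal_mul, ← Complex.ofReal_one,
      ← Complex.ofReal_div]
  rw [hre, energyDensity, hsq _ (G.f'' x), hsq (F.f' x) (G.f' x), energyDensity, energyDensity,
    sub_f', sub_f'']
  ring

lemma seminorm0_sub_le_of_innerBL_eq_zero (h : innerBL G (F - G) = 0) :
    (F - G).seminorm0 ≤ F.seminorm0 := by
  refine Real.sqrt_le_sqrt ?_
  have hpyth : energySq F.f' F.f'' =
      energySq G.f' G.f'' + energySq (F - G).f' (F - G).f'' + 2 * (innerBL G (F - G)).re := by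
    have hinner := integrableOn_innerDensity G (F - G)
    have hG := G.integrableOn_energyDensity
    have hFG := (F - G).integrableOn_energyDensity
    have hre : (innerBL G (F - G)).re = ∫ x in Ioi 0, (innerDensity G (F - G) x).re :=
      (integral_re hinner).symm
    rw [hre, ← integral_const_mul]
    calc energySq F.f' F.f''
        = ∫ x in Ioi 0, (G.energyDensity x + (F - G).energyDensity x +
            2 * (innerDensity G (F - G) x).re) :=
          integral_congr_ae (ae_of_all _ (energyDensity_eq_add_add F G))
      _ = (∫ x in Ioi 0, (G.energyDensity x + (F - G).energyDensity x)) +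
            ∫ x in Ioi 0, 2 * (innerDensity G (F - G) x).re :=
          integral_add (hG.add hFG) (hinner.re.const_mul 2)
      _ = _ := congrArg (· + _) (integral_add hG hFG)
  rw [hpyth, h, Complex.zero_re]
  linarith [G.energySq_nonneg]

lemma seminorm0_nonneg : 0 ≤ F.seminorm0 := Real.sqrt_nonneg _

lemma norm_sqrt_mul_norm_f''_sq_le {t : ℝ} (ht : 0 < t) :
    ‖√t * ‖F.f'' t‖‖ ^ 2 ≤ F.energyDensity t := by
  rw [norm_mul, mul_pow, norm_norm, Real.norm_eq_abs, sq_abs, Real.sq_sqrt ht.le, energyDensity]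
  exact le_add_of_nonneg_right (by positivity)

lemma memLp_sqrt_mul_norm_f'' :
    MemLp (fun t ↦ √t * ‖F.f'' t‖) 2 (volume.restrict (Ioi 0)) := by
  have hmeas : AEStronglyMeasurable (fun t ↦ √t * ‖F.f'' t‖) (volume.restrict (Ioi 0)) :=
    Real.continuous_sqrt.aestronglyMeasurable.mul F.aestronglyMeasurable_f''.norm
  refine (memLp_two_iff_integrable_sq_norm hmeas).2
    (F.integrableOn_energyDensity.mono' (hmeas.norm.pow 2) ?_)
  filter_upwards [ae_restrict_mem measurableSet_Ioi] with t ht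
  rw [norm_pow, norm_norm]
  exact F.norm_sqrt_mul_norm_f''_sq_le ht

lemma setIntegral_norm_sqrt_mul_norm_f''_sq_le {s : Set ℝ} (hs : s ⊆ Ioi 0) :
    ∫ t in s, ‖√t * ‖F.f'' t‖‖ ^ 2 ≤ F.seminorm0 ^ 2 := by
  have hint : IntegrableOn (fun t ↦ ‖√t * ‖F.f'' t‖‖ ^ 2) (Ioi 0) :=
    F.memLp_sqrt_mul_norm_f''.integrable_norm_pow two_ne_zero
  rw [seminorm0, Real.sq_sqrt F.energySq_nonneg]
  calc ∫ t in s, ‖√t * ‖F.f'' t‖‖ ^ 2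
      ≤ ∫ t in Ioi 0, ‖√t * ‖F.f'' t‖‖ ^ 2 :=
        setIntegral_mono_set hint (ae_of_all _ fun _ ↦ by positivity) hs.eventuallyLE
    _ ≤ ∫ t in Ioi 0, F.energyDensity t :=
        setIntegral_mono_on hint F.integrableOn_energyDensity measurableSet_Ioi
          fun t ht ↦ F.norm_sqrt_mul_norm_f''_sq_le ht

lemma norm_f'_sub_le (ha : 0 < a) (hb : 0 < b) :
    ‖F.f' b - F.f' a‖ ≤ √|Real.log (b / a)| * F.seminorm0 := by
  wlog hab : a ≤ b generalizing a b
  · rw [norm_sub_rev, ← abs_neg, ← Real.log_inv, inv_div]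
    exact this hb ha (le_of_not_ge hab)
  have hsub : Ioc a b ⊆ Ioi 0 := fun t ht ↦ ha.trans ht.1
  calc ‖F.f' b - F.f' a‖
      = ‖∫ t in Ioc a b, F.f'' t‖ := by
        rw [(F.locAC a b ha hab).2 b (right_mem_Icc.2 hab), add_sub_cancel_left,
          intervalIntegral.integral_of_le hab]
    _ ≤ ∫ t in Ioc a b, ‖F.f'' t‖ := norm_integral_le_integral_norm _
    _ = ∫ t in Ioc a b, ‖(√t)⁻¹‖ * ‖√t * ‖F.f'' t‖‖ := by
        refine setIntegral_congr_fun measurableSet_Ioc fun t ht ↦ ?_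
        have hsqrt : 0 < √t := Real.sqrt_pos.2 (hsub ht)
        simp [abs_of_pos hsqrt, hsqrt.ne']
    _ ≤ √(∫ t in Ioc a b, ‖(√t)⁻¹‖ ^ 2) * √(∫ t in Ioc a b, ‖√t * ‖F.f'' t‖‖ ^ 2) :=
        integral_norm_mul_norm_le_sqrt_mul_sqrt (memLp_inv_sqrt ha hab)
          (F.memLp_sqrt_mul_norm_f''.mono_measure (Measure.restrict_mono_set _ hsub))
    _ ≤ √|Real.log (b / a)| * F.seminorm0 := by
        rw [integral_norm_inv_sqrt_sq ha hab]
        gcongr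
        exact Real.sqrt_le_iff.2
          ⟨F.seminorm0_nonneg, F.setIntegral_norm_sqrt_mul_norm_f''_sq_le hsub⟩

lemma f'_isBigO_log {l : Filter ℝ} (hl : Tendsto (fun x ↦ |Real.log x|) l atTop)
    (hpos : ∀ᶠ x in l, 0 < x) : F.f' =O[l] Real.log := by
  refine .of_bound (‖F.f' 1‖ + F.seminorm0) ?_
  filter_upwards [hl.eventually_ge_atTop 1, hpos] with x hlog hx
  have hsub := F.norm_f'_sub_le one_pos hx
  rw [div_one] at hsub
  have hsqrt : √|Real.log x| ≤ |Real.log x| := Real.sqrt_le_self_iff.2 (.inr hlog)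
  calc ‖F.f' x‖ ≤ ‖F.f' 1‖ + ‖F.f' x - F.f' 1‖ := norm_le_insert' _ _
    _ ≤ ‖F.f' 1‖ * |Real.log x| + |Real.log x| * F.seminorm0 := by
        gcongr
        · exact le_mul_of_one_le_right (norm_nonneg _) hlog
        · exact hsub.trans (by gcongr; exact F.seminorm0_nonneg)
    _ = (‖F.f' 1‖ + F.seminorm0) * ‖Real.log x‖ := by
        rw [Real.norm_eq_abs]
        ring

lemma norm_f'_le_of_f_eq_zero (ha : 0 < a) (hab : a < b) (hfa : F.f a = 0) (hfb : F.f b = 0) {x : ℝ}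
    (hx : x ∈ Icc a b) : ‖F.f' x‖ ≤ √((b - a) / a) * F.seminorm0 := by
  have hpos {t : ℝ} (ht : t ∈ Icc a b) : 0 < t := ha.trans_le ht.1
  refine norm_le_of_forall_norm_deriv_sub_le hab
    (fun t ht ↦ (F.hasDeriv t (hpos ht)).hasDerivWithinAt) (hfa.trans hfb.symm) fun t ht ↦ ?_
  refine (F.norm_f'_sub_le (hpos hx) (hpos ht)).trans ?_
  gcongr
  · exact F.seminorm0_nonneg
  have hlog_le {u v : ℝ} (hu : u ∈ Icc a b) (hv : v ∈ Icc a b) :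
      Real.log (u / v) ≤ (b - a) / a :=
    calc Real.log (u / v) ≤ u / v - 1 := Real.log_le_sub_one_of_pos (div_pos (hpos hu) (hpos hv))
      _ ≤ b / a - 1 := by
        gcongr
        · exact (hpos hu).le.trans hu.2
        · exact hu.2
        · exact hv.1
      _ = (b - a) / a := by rw [sub_div, div_self ha.ne']
  refine abs_le'.2 ⟨hlog_le ht hx, ?_⟩
  rw [← Real.log_inv, inv_div]
  exact hlog_le hx ht

lemma norm_f_le_of_f_eq_zero (ha : 0 < a) (hab : a < b) (hfa : F.f a = 0) (hfb : F.f b = 0) {x : ℝ}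
    (hx : x ∈ Icc a b) : ‖F.f x‖ ≤ (b - a) / 2 * √((b - a) / a) * F.seminorm0 := by
  rw [mul_assoc]
  exact norm_le_half_mul_of_norm_deriv_le
    (fun t ht ↦ (F.hasDeriv t (ha.trans_le ht.1)).hasDerivWithinAt) hfa hfb
    (fun _ ht ↦ F.norm_f'_le_of_f_eq_zero ha hab hfa hfb ht) hx

lemma norm_f_le_and_norm_f'_le_of_f_eq_zero {r₁ h K : ℝ} (hr₁ : 0 < r₁) (hra : r₁ ≤ a) (hab : a < b)
    (hh : b - a ≤ h) (hfa : F.f a = 0) (hfb : F.f b = 0) (hK : F.seminorm0 ≤ K) {x : ℝ}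
    (hx : x ∈ Icc a b) :
    ‖F.f x‖ ≤ 1 / (2 * √r₁) * h ^ ((3 : ℝ) / 2) * K ∧
      ‖F.f' x‖ ≤ 1 / √r₁ * h ^ ((1 : ℝ) / 2) * K := by
  have ha : 0 < a := hr₁.trans_le hra
  have hgap : 0 ≤ b - a := sub_nonneg.2 hab.le
  have hh₀ : 0 ≤ h := hgap.trans hh
  have hseminorm := F.seminorm0_nonneg
  rw [← half_mul_sqrt_div hh₀, ← sqrt_div_eq_mul_rpow hh₀]
  refine ⟨(F.norm_f_le_of_f_eq_zero ha hab hfa hfb hx).trans ?_,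
    (F.norm_f'_le_of_f_eq_zero ha hab hfa hfb hx).trans ?_⟩ <;> gcongr

end Lambda0

/-- The general element `a x² + b x² ln x + c + d ln x` of `Ker L₀`. -/
def kerFun (a b c d : ℂ) (x : ℝ) : ℂ :=
  a * (x : ℂ) ^ 2 + b * (x : ℂ) ^ 2 * (Real.log x : ℂ) + c + d * (Real.log x : ℂ)

/-- The span of `x`, `x ln x` and `1 / x`, which contains `η'` and `x η''` for `η ∈ Ker L₀`. -/
def logLin (p q s : ℂ) (x : ℝ) : ℂ :=
  p * x + q * (x * Real.log x) + s / x

section Kernel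

variable {x : ℝ}

lemma hasDerivAt_kerFun (a b c d : ℂ) (hx : 0 < x) :
    HasDerivAt (kerFun a b c d) (logLin (2 * a + b) (2 * b) d x) x := by
  have hx' : (x : ℂ) ≠ 0 := mod_cast hx.ne'
  have hlog := (Real.hasDerivAt_log hx.ne').ofReal_comp
  have hid : HasDerivAt (fun y : ℝ ↦ (y : ℂ)) 1 x := (hasDerivAt_id x).ofReal_comp
  have hsq := hid.fun_pow 2
  refine ((((hsq.const_mul a).add ((hsq.const_mul b).mul hlog)).add_const c).add
    (hlog.const_mul d)).congr_deriv ?_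
  simp only [logLin, Complex.ofReal_inv]
  field_simp
  ring

lemma hasDerivAt_logLin (p q s : ℂ) (hx : 0 < x) :
    HasDerivAt (logLin p q s) (p + q * (Real.log x + 1) - s / x ^ 2) x := by
  have hx' : (x : ℂ) ≠ 0 := mod_cast hx.ne'
  have hid : HasDerivAt (fun y : ℝ ↦ (y : ℂ)) 1 x := (hasDerivAt_id x).ofReal_comp
  have hlog := (Real.hasDerivAt_log hx.ne').ofReal_comp
  refine (((hid.const_mul p).add ((hid.mul hlog).const_mul q)).add
    ((hid.fun_inv hx').const_mul s)).congr_deriv ?_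
  simp only [Complex.ofReal_inv]
  field_simp
  ring

lemma contDiffOn_logLin (p q s : ℂ) : ContDiffOn ℝ 1 (logLin p q s) (Ioi 0) := by
  have hid : ContDiffOn ℝ 1 (fun x : ℝ ↦ (x : ℂ)) (Ioi 0) := Complex.ofRealCLM.contDiff.contDiffOn
  have hlog : ContDiffOn ℝ 1 (fun x : ℝ ↦ (Real.log x : ℂ)) (Ioi 0) :=
    Complex.ofRealCLM.contDiff.comp_contDiffOn
      (Real.contDiffOn_log.mono fun x hx ↦ (mem_Ioi.1 hx).ne')
  exact ((contDiffOn_const.mul hid).add (contDiffOn_const.mul (hid.mul hlog))).add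
    (contDiffOn_const.mul (hid.inv fun x hx ↦ mod_cast (mem_Ioi.1 hx).ne'))

end Kernel

namespace Lambda0

/-- The function `x S''(x)`, whose derivative differs from `S'(x) / x` by a constant wherever `S`
lies in `Ker L₀`. It is written with `deriv S.f'` because the field `S.f''` is only determined
almost everywhere. -/
def flux (S : Lambda0) (x : ℝ) : ℂ := x * deriv S.f' x

variable {S T : Lambda0} {a b c d : ℂ} {u v : ℝ}

lemma eqOn_f'_of_eqOn_kerFun (hu : 0 ≤ u) (hS : EqOn S.f (kerFun a b c d) (Ioo u v)) :
    EqOn S.f' (logLin (2 * a + b) (2 * b) d) (Ioo u v) := fun x hx ↦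
  ((S.hasDeriv x (hu.trans_lt hx.1)).congr_of_eventuallyEq
    (hS.symm.eventuallyEq_of_mem (isOpen_Ioo.mem_nhds hx))).unique
    (hasDerivAt_kerFun a b c d (hu.trans_lt hx.1))

lemma eqOn_flux_of_eqOn_kerFun (hu : 0 ≤ u) (hS : EqOn S.f (kerFun a b c d) (Ioo u v)) :
    EqOn S.flux (logLin (2 * a + 3 * b) (2 * b) (-d)) (Ioo u v) := fun x hx ↦ by
  have hx0 : 0 < x := hu.trans_lt hx.1
  have hx' : (x : ℂ) ≠ 0 := mod_cast hx0.ne'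
  rw [flux, ((eqOn_f'_of_eqOn_kerFun hu hS).eventuallyEq_of_mem
    (isOpen_Ioo.mem_nhds hx)).deriv_eq, (hasDerivAt_logLin _ _ _ hx0).deriv, logLin]
  field_simp
  ring

lemma continuousOn_flux (hS : ContDiffOn ℝ 2 S.f (Ioi 0)) : ContinuousOn S.flux (Ioi 0) := by
  have hderiv : ContDiffOn ℝ 1 (deriv S.f) (Ioi 0) :=
    ((contDiffOn_succ_iff_deriv_of_isOpen (n := 1) isOpen_Ioi).1 (by rwa [one_add_one_eq_two])).2.2
  have hf' : ContDiffOn ℝ 1 S.f' (Ioi 0) := hderiv.congr fun x hx ↦ (S.hasDeriv x hx).deriv.symm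
  exact Complex.continuous_ofReal.continuousOn.mul
    (hf'.continuousOn_deriv_of_isOpen isOpen_Ioi le_rfl)

/-- A primitive of `innerDensity S T` on an interval where `S = a x² + b x² ln x + c + d ln x`. -/
def innerPrimitive (S T : Lambda0) (b : ℂ) (x : ℝ) : ℂ :=
  S.flux x * conj (T.f' x) - 4 * b * conj (T.f x)

lemma absolutelyContinuousOnInterval_mul_conj_f'_sub {L : ℝ → ℂ} (hL : ContDiffOn ℝ 1 L (Ioi 0))
    (hu : 0 < u) (huv : u ≤ v) :
    AbsolutelyContinuousOnInterval (fun x ↦ L x * conj (T.f' x) - 4 * b * conj (T.f x)) u v := by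
  have hL_ac := absolutelyContinuousOnInterval_of_contDiffOn_Ioi hL hu huv
  have hT := absolutelyContinuousOnInterval_conj
    (absolutelyContinuousOnInterval_of_contDiffOn_Ioi T.contDiffOn_f hu huv)
  have hT' := absolutelyContinuousOnInterval_conj (T.absolutelyContinuousOnInterval_f' hu huv)
  exact (hL_ac.fun_smul hT').fun_sub (hT.const_smul (4 * b))

lemma hasDerivAt_logLin_mul_conj_f'_sub {x : ℝ} (hx : 0 < x)
    (hS' : S.f' x = logLin (2 * a + b) (2 * b) d x)
    (hS'' : x * S.f'' x = logLin (2 * a + 3 * b) (2 * b) (-d) x)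
    (hT' : HasDerivAt T.f' (T.f'' x) x) :
    HasDerivAt (fun x ↦ logLin (2 * a + 3 * b) (2 * b) (-d) x * conj (T.f' x) -
      4 * b * conj (T.f x)) (innerDensity S T x) x := by
  have hx' : (x : ℂ) ≠ 0 := mod_cast hx.ne'
  refine (((hasDerivAt_logLin _ _ _ hx).mul hT'.star).sub
    ((T.hasDeriv x hx).star.const_mul (4 * b))).congr_deriv ?_
  rw [innerDensity, hS'', hS']
  simp only [logLin, ← starRingEnd_apply]
  field_simp
  ring

lemma intervalIntegrable_innerDensity (hu : 0 ≤ u) (huv : u ≤ v) :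
    IntervalIntegrable (innerDensity S T) volume u v :=
  (intervalIntegrable_iff_integrableOn_Ioc_of_le huv).2
    ((integrableOn_innerDensity S T).mono_set fun _ hx ↦ hu.trans_lt hx.1)

lemma intervalIntegral_innerDensity (hS : ContDiffOn ℝ 2 S.f (Ioi 0)) (hu : 0 < u) (huv : u < v)
    (hker : EqOn S.f (kerFun a b c d) (Ioo u v)) :
    ∫ x in u..v, innerDensity S T x = innerPrimitive S T b v - innerPrimitive S T b u := by
  set L : ℝ → ℂ := logLin (2 * a + 3 * b) (2 * b) (-d)
  have hL : ContDiffOn ℝ 1 L (Ioi 0) := contDiffOn_logLin _ _ _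
  have hS' : EqOn S.f' (logLin (2 * a + b) (2 * b) d) (Icc u v) :=
    eqOn_Icc_of_eqOn_Ioo S.contDeriv (contDiffOn_logLin _ _ _).continuousOn hu huv
      (eqOn_f'_of_eqOn_kerFun hu.le hker)
  have hflux : EqOn S.flux L (Icc u v) :=
    eqOn_Icc_of_eqOn_Ioo (continuousOn_flux hS) hL.continuousOn hu huv
      (eqOn_flux_of_eqOn_kerFun hu.le hker)
  have hderiv : ∀ᵐ x, x ∈ [[u, v]] → HasDerivAt
      (fun x ↦ L x * conj (T.f' x) - 4 * b * conj (T.f x)) (innerDensity S T x) x := by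
    filter_upwards [S.ae_hasDerivAt_f' hu huv.le, T.ae_hasDerivAt_f' hu huv.le] with x hSx hTx hx
    have hx' : x ∈ Icc u v := by rwa [uIcc_of_le huv.le] at hx
    refine hasDerivAt_logLin_mul_conj_f'_sub (hu.trans_le hx'.1) (hS' hx') ?_ (hTx hx)
    rw [← (hSx hx).deriv]
    exact hflux hx'
  rw [integral_eq_sub_of_absolutelyContinuousOnInterval
    (absolutelyContinuousOnInterval_mul_conj_f'_sub hL hu huv.le) hderiv
    (intervalIntegrable_innerDensity hu.le huv.le), innerPrimitive, innerPrimitive,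
    hflux (left_mem_Icc.2 huv.le), hflux (right_mem_Icc.2 huv.le)]

lemma conj_f'_isBigO_log {l : Filter ℝ} (hl : Tendsto (fun x ↦ |Real.log x|) l atTop)
    (hpos : ∀ᶠ x in l, 0 < x) : (fun x ↦ conj (T.f' x)) =O[l] Real.log :=
  .of_norm_left (by simpa only [RCLike.norm_conj] using (T.f'_isBigO_log hl hpos).norm_left)

lemma tendsto_innerPrimitive_atTop (hS : EqOn S.f (kerFun 0 0 c d) (Ioi u)) (hu : 0 ≤ u) :
    Tendsto (innerPrimitive S T 0) atTop (𝓝 0) := by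
  have hflux : S.flux =O[atTop] fun x ↦ x⁻¹ := by
    refine .of_bound ‖d‖ ?_
    filter_upwards [eventually_gt_atTop u] with x hx
    rw [eqOn_flux_of_eqOn_kerFun (v := x + 1) hu (hS.mono Ioo_subset_Ioi_self) ⟨hx, by simp⟩]
    simp [logLin, div_eq_mul_inv]
  have hT' : (fun x ↦ conj (T.f' x)) =O[atTop] Real.log :=
    conj_f'_isBigO_log (tendsto_abs_atTop_atTop.comp Real.tendsto_log_atTop)
      (eventually_gt_atTop 0)
  have hlim : Tendsto (fun x ↦ x⁻¹ * Real.log x) atTop (𝓝 0) := by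
    simpa only [div_eq_inv_mul, id] using Real.isLittleO_log_id_atTop.tendsto_div_nhds_zero
  unfold innerPrimitive
  simpa only [mul_zero, zero_mul, sub_zero] using (hflux.mul hT').trans_tendsto hlim

lemma tendsto_innerPrimitive_nhdsGT_zero (hS : EqOn S.f (kerFun a b c 0) (Ioo 0 v)) (hv : 0 < v)
    (hbT : Tendsto (fun x ↦ b * conj (T.f x)) (𝓝[>] 0) (𝓝 0)) :
    Tendsto (innerPrimitive S T b) (𝓝[>] 0) (𝓝 0) := by
  have hlog_top : Tendsto (fun x ↦ |Real.log x|) (𝓝[>] 0) atTop :=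
    tendsto_abs_atBot_atTop.comp Real.tendsto_log_nhdsGT_zero
  have hflux : S.flux =O[𝓝[>] 0] fun x ↦ x * Real.log x := by
    refine .of_bound (‖2 * a + 3 * b‖ + ‖2 * b‖) ?_
    filter_upwards [Ioo_mem_nhdsGT hv, hlog_top.eventually_ge_atTop 1] with x hx hlog
    rw [eqOn_flux_of_eqOn_kerFun le_rfl hS hx]
    have hx_le : ‖(x : ℂ)‖ ≤ ‖x * Real.log x‖ := by
      rw [Complex.norm_real, norm_mul]
      exact le_mul_of_one_le_right (norm_nonneg x) hlog
    calc ‖logLin (2 * a + 3 * b) (2 * b) (-0) x‖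
        = ‖(2 * a + 3 * b) * x + 2 * b * (x * Real.log x : ℝ)‖ := by simp [logLin]
      _ ≤ ‖2 * a + 3 * b‖ * ‖(x : ℂ)‖ + ‖2 * b‖ * ‖x * Real.log x‖ := by
        rw [← Complex.norm_real (x * Real.log x), ← norm_mul, ← norm_mul]
        exact norm_add_le _ _
      _ ≤ (‖2 * a + 3 * b‖ + ‖2 * b‖) * ‖x * Real.log x‖ := by
        rw [add_mul]
        gcongr
  have hT' : (fun x ↦ conj (T.f' x)) =O[𝓝[>] 0] Real.log :=
    conj_f'_isBigO_log hlog_top self_mem_nhdsWithin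
  have hlim : Tendsto (fun x ↦ x * Real.log x * Real.log x) (𝓝[>] 0) (𝓝 0) := by
    have hsq := (tendsto_log_mul_rpow_nhdsGT_zero (one_half_pos (α := ℝ))).pow 2
    rw [zero_pow two_ne_zero] at hsq
    refine hsq.congr' ?_
    filter_upwards [self_mem_nhdsWithin] with x (hx : 0 < x)
    rw [← Real.sqrt_eq_rpow, mul_pow, Real.sq_sqrt hx.le]
    ring
  unfold innerPrimitive
  simpa only [mul_assoc, mul_zero, sub_zero] using
    ((hflux.mul hT').trans_tendsto hlim).sub (hbT.const_mul 4)

lemma setIntegral_innerDensity_Ioi (hC2 : ContDiffOn ℝ 2 S.f (Ioi 0))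
    (hS : EqOn S.f (kerFun 0 0 c d) (Ioi u)) (hu : 0 < u) :
    ∫ x in Ioi u, innerDensity S T x = -innerPrimitive S T 0 u := by
  have hint : IntegrableOn (innerDensity S T) (Ioi u) :=
    (integrableOn_innerDensity S T).mono_set (Ioi_subset_Ioi hu.le)
  refine tendsto_nhds_unique (intervalIntegral_tendsto_integral_Ioi u hint tendsto_id) ?_
  rw [← zero_sub]
  refine ((tendsto_innerPrimitive_atTop (T := T) hS hu.le).sub_const _).congr' ?_
  filter_upwards [eventually_gt_atTop u] with v huv
  exact (intervalIntegral_innerDensity hC2 hu huv (hS.mono Ioo_subset_Ioi_self)).symm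

lemma intervalIntegral_innerDensity_zero_left (hC2 : ContDiffOn ℝ 2 S.f (Ioi 0))
    (hS : EqOn S.f (kerFun a b c 0) (Ioo 0 v)) (hv : 0 < v)
    (hbT : Tendsto (fun x ↦ b * conj (T.f x)) (𝓝[>] 0) (𝓝 0)) :
    ∫ x in 0..v, innerDensity S T x = innerPrimitive S T b v := by
  have hcont : ContinuousOn (fun x ↦ ∫ t in x..v, innerDensity S T t) [[0, v]] :=
    intervalIntegral.continuousOn_primitive_interval_left
      (intervalIntegrable_iff' (by simp) |>.1 (intervalIntegrable_innerDensity le_rfl hv.le))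
  have hlim := (hcont 0 left_mem_uIcc).mono_left
    (nhdsWithin_le_of_mem (mem_of_superset (Ioo_mem_nhdsGT hv)
      (Ioo_subset_Icc_self.trans Icc_subset_uIcc)))
  refine tendsto_nhds_unique hlim ?_
  rw [← sub_zero (innerPrimitive S T b v)]
  refine ((tendsto_innerPrimitive_nhdsGT_zero hS hv hbT).const_sub _).congr' ?_
  filter_upwards [Ioo_mem_nhdsGT hv] with u hu
  exact (intervalIntegral_innerDensity hC2 hu.1 hu.2 (hS.mono (Ioo_subset_Ioo_left hu.1.le))).symm

lemma innerPrimitive_of_f_eq_zero (hT : T.f u = 0) (b b' : ℂ) :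
    innerPrimitive S T b u = innerPrimitive S T b' u := by
  simp [innerPrimitive, hT]

end Lambda0

namespace IsBLSpline

open Lambda0

variable {S T : Lambda0} {n : ℕ} {r : ℕ → ℝ}

lemma intervalIntegral_innerDensity (hS : IsBLSpline n r S.f) (hpos : 0 < r 1)
    (hr : StrictMonoOn r (Icc 1 n)) (hn : 1 ≤ n) (hT : ∀ j ∈ Icc 1 n, T.f (r j) = 0) :
    ∫ x in r 1..r n, innerDensity S T x =
      innerPrimitive S T 0 (r n) - innerPrimitive S T 0 (r 1) := by
  have hrpos {j : ℕ} (hj : j ∈ Icc 1 n) : 0 < r j :=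
    hpos.trans_le (hr.monotoneOn (left_mem_Icc.2 hn) hj hj.1)
  have hmem {j : ℕ} (hj : j ∈ Ico 1 n) : j ∈ Icc 1 n ∧ j + 1 ∈ Icc 1 n :=
    ⟨Ico_subset_Icc_self hj, by lia, hj.2⟩
  have hlt {j : ℕ} (hj : j ∈ Ico 1 n) : r j < r (j + 1) :=
    hr (hmem hj).1 (hmem hj).2 j.lt_succ_self
  have hpiece (j : ℕ) (hj : j ∈ Ico 1 n) : ∫ x in r j..r (j + 1), innerDensity S T x =
      innerPrimitive S T 0 (r (j + 1)) - innerPrimitive S T 0 (r j) := by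
    obtain ⟨a, b, c, d, hker⟩ := hS.pieces j hj.1 hj.2
    rw [Lambda0.intervalIntegral_innerDensity hS.smooth (hrpos (hmem hj).1) (hlt hj) hker,
      innerPrimitive_of_f_eq_zero (hT _ (hmem hj).1) b 0,
      innerPrimitive_of_f_eq_zero (hT _ (hmem hj).2) b 0]
  rw [← intervalIntegral.sum_integral_adjacent_intervals_Ico hn fun j hj ↦
      intervalIntegrable_innerDensity (hrpos (hmem hj).1).le (hlt hj).le,
    Finset.sum_congr rfl fun j hj ↦ hpiece j (Finset.mem_Ico.1 hj)]
  exact Finset.sum_Ico_sub (fun j ↦ innerPrimitive S T 0 (r j)) hn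

lemma exists_eqOn_kerFun_left (hS : IsBLSpline n r S.f)
    (hT : Tendsto T.f (𝓝[>] 0) (𝓝 0) ∨ NonSingularBLS (r 1) S.f) :
    ∃ a b c, EqOn S.f (kerFun a b c 0) (Ioo 0 (r 1)) ∧
      Tendsto (fun x ↦ b * conj (T.f x)) (𝓝[>] 0) (𝓝 0) := by
  rcases hT with hT | ⟨a, c, hker⟩
  · obtain ⟨a, b, c, hker⟩ := hS.left
    refine ⟨a, b, c, fun x hx ↦ by rw [hker x hx, kerFun, zero_mul, add_zero], ?_⟩
    simpa using (hT.star.const_mul b)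
  · exact ⟨a, 0, c, fun x hx ↦ by simp [hker x hx, kerFun], by simp⟩

theorem innerBL_eq_zero (hS : IsBLSpline n r S.f) (hpos : 0 < r 1)
    (hr : StrictMonoOn r (Icc 1 n)) (hn : 1 ≤ n) (hT : ∀ j ∈ Icc 1 n, T.f (r j) = 0)
    (hT₀ : Tendsto T.f (𝓝[>] 0) (𝓝 0) ∨ NonSingularBLS (r 1) S.f) : innerBL S T = 0 := by
  have h1n : r 1 ≤ r n := hr.monotoneOn (left_mem_Icc.2 hn) (right_mem_Icc.2 hn) hn
  obtain ⟨a, b, c, hleft, hbT⟩ := hS.exists_eqOn_kerFun_left hT₀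
  obtain ⟨c', d, hright⟩ := hS.right
  have hright : EqOn S.f (kerFun 0 0 c' d) (Ioi (r n)) := fun x hx ↦ by
    simp [hright x hx, kerFun]
  have hint : IntegrableOn (innerDensity S T) (Ioi (r n)) :=
    (integrableOn_innerDensity S T).mono_set (Ioi_subset_Ioi (hpos.trans_le h1n).le)
  calc innerBL S T
      = (∫ x in 0..r n, innerDensity S T x) + ∫ x in Ioi (r n), innerDensity S T x :=
        (intervalIntegral.integral_interval_add_Ioi (integrableOn_innerDensity S T) hint).symm
    _ = (∫ x in 0..r 1, innerDensity S T x) + (∫ x in r 1..r n, innerDensity S T x) +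
          ∫ x in Ioi (r n), innerDensity S T x := by
        rw [intervalIntegral.integral_add_adjacent_intervals
          (intervalIntegrable_innerDensity le_rfl hpos.le)
          (intervalIntegrable_innerDensity hpos.le h1n)]
    _ = innerPrimitive S T 0 (r 1) + (innerPrimitive S T 0 (r n) - innerPrimitive S T 0 (r 1)) +
          -innerPrimitive S T 0 (r n) := by
        rw [intervalIntegral_innerDensity_zero_left hS.smooth hleft hpos hbT,
          hS.intervalIntegral_innerDensity hpos hr hn hT,
          setIntegral_innerDensity_Ioi hS.smooth hright (hpos.trans_le h1n),
          innerPrimitive_of_f_eq_zero (hT 1 (left_mem_Icc.2 hn)) b 0]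
    _ = 0 := by abel

theorem seminorm0_sub_le {F : Lambda0} (hS : IsBLSpline n r S.f) (hpos : 0 < r 1)
    (hr : StrictMonoOn r (Icc 1 n)) (hn : 1 ≤ n) (hint : ∀ j ∈ Icc 1 n, S.f (r j) = F.f (r j))
    (h₀ : Tendsto F.f (𝓝[>] 0) (𝓝 (S.f 0)) ∨ NonSingularBLS (r 1) S.f) :
    (F - S).seminorm0 ≤ F.seminorm0 := by
  refine seminorm0_sub_le_of_innerBL_eq_zero F S (hS.innerBL_eq_zero hpos hr hn
    (fun j hj ↦ by rw [sub_f, hint j hj, sub_self]) (h₀.imp_left fun hF ↦ ?_))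
  have hS₀ : Tendsto S.f (𝓝[>] 0) (𝓝 (S.f 0)) :=
    hS.cont0.mono_left (nhdsWithin_mono 0 Ioi_subset_Ici_self)
  rw [← sub_self (S.f 0)]
  exact hF.sub hS₀

end IsBLSpline

/-- `L∞` error bound: for `l ∈ {0,1}`,
`‖f^{(l)} − σ^{(l)}‖_{L∞[r₁,r_n]} ≤ (1/(2^{1−l}·√r₁))·h^{3/2−l}·‖f‖₀`,
where `h` is the maximal gap between consecutive knots and `σ` is either of the
Beppo Levi `L₀`-spline interpolants `σ^A`, `σ^B` of `f ∈ Λ₀`. -/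
theorem stmt11 (n : ℕ) (hn : 2 ≤ n) (r : ℕ → ℝ) (hpos : 0 < r 1)
    (hmono : ∀ j, 1 ≤ j → j < n → r j < r (j + 1))
    (h : ℝ) (hh : IsGreatest {d : ℝ | ∃ j, 1 ≤ j ∧ j < n ∧ d = r (j + 1) - r j} h)
    (F S : Lambda0) (hS : IsBLSpline n r S.f)
    (hint : ∀ j, 1 ≤ j → j ≤ n → S.f (r j) = F.f (r j))
    (hAB : Filter.Tendsto F.f (nhdsWithin 0 (Set.Ioi 0)) (nhds (S.f 0)) ∨
      NonSingularBLS (r 1) S.f) :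
    (∀ x ∈ Set.Icc (r 1) (r n),
      ‖F.f x - S.f x‖ ≤ 1 / (2 * Real.sqrt (r 1)) * h ^ ((3:ℝ)/2) * F.seminorm0) ∧
    (∀ x ∈ Set.Icc (r 1) (r n),
      ‖F.f' x - S.f' x‖ ≤ 1 / Real.sqrt (r 1) * h ^ ((1:ℝ)/2) * F.seminorm0) := by
  have hr : StrictMonoOn r (Icc 1 n) := strictMonoOn_of_lt_add_one ordConnected_Icc
    fun j _ hj hj' ↦ hmono j hj.1 hj'.2
  have hzero {j : ℕ} (hj : j ∈ Icc 1 n) : (F - S).f (r j) = 0 := by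
    rw [Lambda0.sub_f, hint j hj.1 hj.2, sub_self]
  have henergy : (F - S).seminorm0 ≤ F.seminorm0 :=
    hS.seminorm0_sub_le hpos hr (by lia) (fun j hj ↦ hint j hj.1 hj.2) hAB
  rw [← forall₂_and]
  intro x hx
  obtain ⟨j, hj, hjn, hxj⟩ := exists_mem_Icc_succ (by lia) hx
  have hj₀ : j ∈ Icc 1 n := ⟨hj, hjn.le⟩
  have hj₁ : j + 1 ∈ Icc 1 n := ⟨by lia, hjn⟩
  have hgap : r (j + 1) - r j ≤ h := hh.2 ⟨j, hj, hjn, rfl⟩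
  exact (F - S).norm_f_le_and_norm_f'_le_of_f_eq_zero hpos
    (hr.monotoneOn (left_mem_Icc.2 (by lia)) hj₀ hj) (hmono j hj hjn) hgap (hzero hj₀) (hzero hj₁)
    henergy hxj
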